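/- Let H be a complex separable Hilbert space, let B be a (possibly unbounded) densely defined closed linear operator in H, and let A be a bounded operator on H such that both A and the product AB (with its natural domain D(AB) = D(B)) are normal. If BA is normal, then A*AB ⊂ BA*A, i.e., BA*A extends A*AB. -/

import Mathlib

noncomputable section

variable {H : Type*} [NormedAddCommGroup H] [InnerProductSpace ℂ H] [CompleteSpace H]

namespace LinearPMap

/-- The composition `S ∘ T` of two partially defined linear operators, with its natural
domain `{x ∈ D(T) : T x ∈ D(S)}`. -/
noncomputable def pcomp (S T : H →ₗ.[ℂ] H) : H →ₗ.[ℂ] H :=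
  { domain := (S.domain.comap T.toFun).map T.domain.subtype
    toFun := (S.toFun.comp ((T.toFun.comp (S.domain.comap T.toFun).subtype).codRestrict
        S.domain fun x => x.2)).comp
      (Submodule.equivMapOfInjective T.domain.subtype Subtype.val_injective
        (S.domain.comap T.toFun)).symm.toLinearMap }

/-- A bounded operator viewed as a partially defined operator with domain the
whole space. -/
noncomputable def ofCLM (A : H →L[ℂ] H) : H →ₗ.[ℂ] H :=
  A.toLinearMap.toPMap ⊤

/-- An unbounded densely defined operator is *normal* if it is closed and
`N N* = N* N` (including equality of the natural domains). -/
def IsNormalPMap (N : H →ₗ.[ℂ] H) : Prop :=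
  Dense (N.domain : Set H) ∧ N.IsClosed ∧ N.pcomp N.adjoint = N.adjoint.pcomp N

end LinearPMap

open LinearPMap ContinuousLinearMap

/-- A bounded operator `T` is *normal* if `T T* = T* T`. -/
def IsNormalOp (T : H →L[ℂ] H) : Prop :=
  T * ContinuousLinearMap.adjoint T = ContinuousLinearMap.adjoint T * T

/-!
Since `A (B A) = (A B) A`, the bounded operator `A` intertwines the normal operators `B A` and
`A B`. By Fuglede–Putnam `A (B A)* ⊂ (A B)* A`, and taking adjoints gives `A* (A B) ⊂ (B A) A*`;
normality of `A` turns `A A*` into `A* A`.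

The Fuglede–Putnam theorem for unbounded normal `N`, `M` is reduced to bounded operators through
`R = (1 + N* N)⁻¹`, `C = N R` and the analogous `S`, `D` for `M`: the graph of `N` is
`{(x, y) | R y = C x}`, and `X N ⊂ M X` amounts to `S X C = D X R`. Functions of `R` vanishing
near `0` cut `N = C R⁻¹` down to bounded normal operators, to which the Fuglede–Putnam theorem in
C⋆-algebras applies; removing the cutoff yields `S X C* = D* X R`. The adjoint of this last
identity says `X* M ⊂ N X*`.
-/

open Filter Topology

section CStarAlgebra

variable {A : Type*} [CStarAlgebra A] {r s c d x : A} {ε : ℝ}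

/-- The function `t ↦ max (t² - ε) 0` of `r`. It approximates `r²` as `ε → 0` and vanishes on
the part of the spectrum where `t² ≤ ε`, so that `r` is invertible on its support. -/
def sqCutoff (ε : ℝ) (r : A) : A :=
  cfc (fun t : ℝ ↦ max (t ^ 2 - ε) 0) r

theorem tendsto_sqCutoff (hr : IsSelfAdjoint r) :
    Tendsto (fun ε ↦ sqCutoff ε r) (𝓝[>] 0) (𝓝 (r ^ 2)) := by
  rw [tendsto_iff_norm_sub_tendsto_zero]
  refine squeeze_zero' (.of_forall fun _ ↦ norm_nonneg _) ?_ (tendsto_id.mono_left inf_le_left)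
  filter_upwards [self_mem_nhdsWithin] with ε (hε : 0 < ε)
  rw [sqCutoff, ← cfc_pow_id (R := ℝ) r 2, ← cfc_sub _ _ r]
  refine norm_cfc_le hε.le fun t _ ↦ ?_
  rw [Real.norm_eq_abs, abs_le, id_eq]
  constructor
  · linarith [le_max_left (t ^ 2 - ε) 0]
  · linarith [max_le (sub_le_self (t ^ 2) hε.le) (sq_nonneg t)]

theorem sqCutoff_mul_cfc_mul_self (hr : IsSelfAdjoint r) (hε : 0 < ε) :
    sqCutoff ε r * cfc (fun t : ℝ ↦ t / max (t ^ 2) ε) r * r = sqCutoff ε r := by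
  have hmax (t : ℝ) : max (t ^ 2) ε ≠ 0 := (lt_max_of_lt_right hε).ne'
  have : Continuous fun t : ℝ ↦ t / max (t ^ 2) ε := by fun_prop (disch := exact hmax _)
  nth_rw 3 [← cfc_id' ℝ r]
  rw [sqCutoff, ← cfc_mul _ _ r, ← cfc_mul _ _ r]
  congr 1
  ext t
  rcases le_total (t ^ 2) ε with h | h
  · simp [h]
  · have ht : t ≠ 0 := by
      rintro rfl
      simp [hε.not_ge] at h
    rw [max_eq_left h]
    field_simp

/-- If `r` is injective, `n` is the bounded part of the unbounded operator `c r⁻¹` on the support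
of the cutoff. -/
theorem exists_isStarNormal_sqCutoff_mul_mul (hr : IsSelfAdjoint r) (hc : IsStarNormal c)
    (hrc : Commute r c) (hε : 0 < ε) :
    ∃ n : A, IsStarNormal n ∧ Commute r n ∧ sqCutoff ε r * r * n = sqCutoff ε r * c ∧
      sqCutoff ε r * r * star n = sqCutoff ε r * star c := by
  set p := cfc (fun t : ℝ ↦ t / max (t ^ 2) ε) r
  have hp_star : star p = p := (cfc_predicate (p := IsSelfAdjoint) _ r).star_eq
  have hpr : Commute p r := (Commute.refl r).cfc_real _
  have hpc : Commute p c := hrc.cfc_real _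
  have hpc_star : Commute p (star c) := (hc.commute_star_right hrc).cfc_real _
  have cancel (b : A) : sqCutoff ε r * r * (p * b) = sqCutoff ε r * b := by
    rw [← mul_assoc, mul_assoc _ r, ← hpr.eq, ← mul_assoc, sqCutoff_mul_cfc_mul_self hr hε]
  have hn_star : star (p * c) = p * star c := by rw [star_mul, hp_star, hpc_star.eq]
  refine ⟨p * c, ⟨?_⟩, hpr.symm.mul_right hrc, cancel c, by rw [hn_star, cancel]⟩
  rw [hn_star]
  exact ((Commute.refl p).mul_right hpc).mul_left
    (hpc_star.symm.mul_right hc.star_comm_self)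

theorem sqCutoff_mul_mul_sqCutoff_eq (hr : IsSelfAdjoint r) (hs : IsSelfAdjoint s)
    (hc : IsStarNormal c) (hd : IsStarNormal d) (hrc : Commute r c) (hsd : Commute s d)
    (h : s * x * c = d * x * r) (hε : 0 < ε) :
    sqCutoff ε s * (s * x * star c) * sqCutoff ε r =
      sqCutoff ε s * (star d * x * r) * sqCutoff ε r := by
  obtain ⟨n, hn, -, hn_mul, hn_star_mul⟩ := exists_isStarNormal_sqCutoff_mul_mul hr hc hrc hε
  obtain ⟨m, hm, hsm, hm_mul, hm_star_mul⟩ := exists_isStarNormal_sqCutoff_mul_mul hs hd hsd hε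
  have commute_sqCutoff {a b : A} (hab : Commute a b) : Commute (sqCutoff ε a) b :=
    hab.cfc_real _
  set f := sqCutoff ε r
  set g := sqCutoff ε s
  have hfr : Commute f r := commute_sqCutoff (Commute.refl r)
  have mul_right_eq {b k : A} (hrb : Commute r b) (hk : f * r * k = f * b) :
      g * s * x * r * f * k = g * (s * x * b) * f :=
    calc g * s * x * r * f * k = g * s * x * (f * r * k) := by rw [hfr.eq]; noncomm_ring
      _ = g * (s * x * b) * f := by rw [hk, (commute_sqCutoff hrb).eq]; noncomm_ring
  have mul_left_eq {b k : A} (hsk : Commute s k) (hk : g * s * k = g * b) :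
      k * (g * s * x * r * f) = g * (b * x * r) * f :=
    calc k * (g * s * x * r * f) = k * (g * s) * x * r * f := by noncomm_ring
      _ = g * (b * x * r) * f := by
        rw [← ((commute_sqCutoff hsk).mul_left hsk).eq, hk]; noncomm_ring
  have intertwines : SemiconjBy (g * s * x * r * f) n m :=
    calc g * s * x * r * f * n = g * (s * x * c) * f := mul_right_eq hrc hn_mul
      _ = m * (g * s * x * r * f) := by rw [h, mul_left_eq hsm hm_mul]
  rw [← mul_right_eq (hc.commute_star_right hrc) hn_star_mul,
    ← mul_left_eq (hm.commute_star_right hsm) hm_star_mul]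
  exact intertwines.star_right hn hm

theorem mul_mul_star_eq_star_mul_mul (hr : IsSelfAdjoint r) (hs : IsSelfAdjoint s)
    (hr_reg : IsRightRegular r) (hs_reg : IsLeftRegular s) (hc : IsStarNormal c)
    (hd : IsStarNormal d) (hrc : Commute r c) (hsd : Commute s d)
    (h : s * x * c = d * x * r) : s * x * star c = star d * x * r := by
  have tendsto_cutoff (y : A) : Tendsto (fun ε ↦ sqCutoff ε s * y * sqCutoff ε r) (𝓝[>] 0)
      (𝓝 (s ^ 2 * y * r ^ 2)) :=
    ((tendsto_sqCutoff hs).mul_const y).mul (tendsto_sqCutoff hr)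
  have cutoff_eq : ∀ᶠ ε in 𝓝[>] 0, sqCutoff ε s * (s * x * star c) * sqCutoff ε r =
      sqCutoff ε s * (star d * x * r) * sqCutoff ε r := by
    filter_upwards [self_mem_nhdsWithin] with ε hε
    exact sqCutoff_mul_mul_sqCutoff_eq hr hs hc hd hrc hsd h hε
  have limit_eq : s ^ 2 * (s * x * star c) * r ^ 2 = s ^ 2 * (star d * x * r) * r ^ 2 :=
    tendsto_nhds_unique_of_eventuallyEq (tendsto_cutoff _) (tendsto_cutoff _) cutoff_eq
  exact hs_reg.pow 2 (hr_reg.pow 2 limit_eq)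

end CStarAlgebra

section Graph

theorem mem_graph_adjoint_iff {𝕜 E F : Type*} [RCLike 𝕜] [NormedAddCommGroup E]
    [InnerProductSpace 𝕜 E] [CompleteSpace E] [NormedAddCommGroup F] [InnerProductSpace 𝕜 F]
    {T : E →ₗ.[𝕜] F} (hT : Dense (T.domain : Set E)) {x : F} {y : E} :
    (x, y) ∈ T.adjoint.graph ↔ ∀ a b, (a, b) ∈ T.graph → inner 𝕜 b x = inner 𝕜 a y := by
  simp only [adjoint_graph_eq_graph_adjoint hT, Submodule.mem_adjoint_iff, sub_eq_zero]

variable {E : Type*} [NormedAddCommGroup E] [InnerProductSpace ℂ E]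

theorem mem_graph_pcomp_iff {S T : E →ₗ.[ℂ] E} {x z : E} :
    (x, z) ∈ (S.pcomp T).graph ↔ ∃ y, (x, y) ∈ T.graph ∧ (y, z) ∈ S.graph := by
  have pcomp_apply (u : T.domain) (hu : T u ∈ S.domain) (hu' : (u : E) ∈ (S.pcomp T).domain) :
      S.pcomp T ⟨u, hu'⟩ = S ⟨T u, hu⟩ := by
    have symm_apply : (Submodule.equivMapOfInjective T.domain.subtype Subtype.val_injective
        (S.domain.comap T.toFun)).symm ⟨u, hu'⟩ = ⟨u, hu⟩ := by
      rw [LinearEquiv.symm_apply_eq]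
      rfl
    exact congrArg (fun v : S.domain.comap T.toFun ↦ S ⟨T v, v.2⟩) symm_apply
  constructor
  · intro h
    obtain ⟨⟨_, u, hu, rfl⟩, rfl, rfl⟩ := (mem_graph_iff _).1 h
    exact ⟨T u, T.mem_graph u, pcomp_apply u hu _ ▸ S.mem_graph ⟨T u, hu⟩⟩
  · rintro ⟨y, hxy, hyz⟩
    obtain ⟨u, rfl, rfl⟩ := (mem_graph_iff _).1 hxy
    have hu : T u ∈ S.domain := mem_domain_of_mem_graph hyz
    rw [S.mem_graph_snd_inj hyz (S.mem_graph ⟨T u, hu⟩) rfl, ← pcomp_apply u hu ⟨u, hu, rfl⟩]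
    exact (S.pcomp T).mem_graph ⟨u, u, hu, rfl⟩

theorem mem_graph_ofCLM_iff {A : E →L[ℂ] E} {x y : E} : (x, y) ∈ (ofCLM A).graph ↔ A x = y := by
  simp [ofCLM, mem_graph_iff]

theorem pcomp_assoc (S T U : E →ₗ.[ℂ] E) : (S.pcomp T).pcomp U = S.pcomp (T.pcomp U) := by
  refine eq_of_eq_graph (SetLike.ext fun ⟨x, z⟩ ↦ ?_)
  simp only [mem_graph_pcomp_iff]
  tauto

theorem ofCLM_mul (A A' : E →L[ℂ] E) : ofCLM (A * A') = (ofCLM A).pcomp (ofCLM A') := by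
  refine eq_of_eq_graph (SetLike.ext fun ⟨x, z⟩ ↦ ?_)
  simp only [mem_graph_pcomp_iff, mem_graph_ofCLM_iff, exists_eq_left',
    mul_apply_eq_comp]

theorem ofCLM_pcomp_le_pcomp_ofCLM_iff {N M : E →ₗ.[ℂ] E} {X : E →L[ℂ] E} :
    (ofCLM X).pcomp N ≤ M.pcomp (ofCLM X) ↔
      ∀ x y, (x, y) ∈ N.graph → (X x, X y) ∈ M.graph := by
  rw [← le_graph_iff, SetLike.le_def, Prod.forall]
  simp only [mem_graph_pcomp_iff, mem_graph_ofCLM_iff]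
  constructor
  · intro h x y hxy
    obtain ⟨_, rfl, hX⟩ := h x (X y) ⟨y, hxy, rfl⟩
    exact hX
  · rintro h x _ ⟨y, hxy, rfl⟩
    exact ⟨X x, rfl, h x y hxy⟩

end Graph

/-- `R = (1 + N* N)⁻¹` and `C = N (1 + N* N)⁻¹`, expressed through the graphs of `N` and `N*`: for
every `v`, the vector `R v` solves `u + N* N u = v`. -/
structure IsResolventPair {𝕜 E F : Type*} [RCLike 𝕜] [NormedAddCommGroup E]
    [InnerProductSpace 𝕜 E] [CompleteSpace E] [NormedAddCommGroup F] [InnerProductSpace 𝕜 F]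
    (N : E →ₗ.[𝕜] F) (R : E →L[𝕜] E) (C : E →L[𝕜] F) : Prop where
  mem_graph (v : E) : (R v, C v) ∈ N.graph
  mem_graph_adjoint (v : E) : (C v, v - R v) ∈ N.adjoint.graph

namespace IsResolventPair

section General

variable {𝕜 E F : Type*} [RCLike 𝕜] [NormedAddCommGroup E] [InnerProductSpace 𝕜 E]
  [CompleteSpace E] [NormedAddCommGroup F] [InnerProductSpace 𝕜 F]
  {N : E →ₗ.[𝕜] F} {R : E →L[𝕜] E} {C : E →L[𝕜] F}

theorem apply_add (h : IsResolventPair N R C) (hd : Dense (N.domain : Set E)) {x z : E} {y : F}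
    (hxy : (x, y) ∈ N.graph) (hyz : (y, z) ∈ N.adjoint.graph) : R (x + z) = x := by
  set u := x - R (x + z)
  have hu : (u, y - C (x + z)) ∈ N.graph := N.graph.sub_mem hxy (h.mem_graph (x + z))
  have hu' : (y - C (x + z), -u) ∈ N.adjoint.graph := by
    convert N.adjoint.graph.sub_mem hyz (h.mem_graph_adjoint (x + z)) using 1
    rw [Prod.mk_sub_mk]
    congr 1
    simp only [u]
    abel
  have hinner := (mem_graph_adjoint_iff hd).1 hu' _ _ hu
  rw [inner_neg_right, inner_self_eq_norm_sq_to_K, inner_self_eq_norm_sq_to_K] at hinner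
  have hnorm : ‖y - C (x + z)‖ ^ 2 = -‖u‖ ^ 2 := by exact_mod_cast hinner
  have hu_zero : ‖u‖ ^ 2 = 0 := by linarith [sq_nonneg ‖u‖, sq_nonneg ‖y - C (x + z)‖]
  exact (sub_eq_zero.1 (by simpa only [sq_eq_zero_iff, norm_eq_zero] using hu_zero)).symm

theorem injective (h : IsResolventPair N R C) : Function.Injective R := by
  refine (injective_iff_map_eq_zero R).2 fun v hv ↦ ?_
  have hCv : C v = 0 := N.graph_fst_eq_zero_snd (h.mem_graph v) hv
  simpa [hv] using N.adjoint.graph_fst_eq_zero_snd (h.mem_graph_adjoint v) hCv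

variable [CompleteSpace F]

/-- The pair `(R v, C v)` is the orthogonal projection of `(v, 0)` onto the graph of `N`. -/
theorem exists_of_isClosed (hd : Dense (N.domain : Set E)) (hN : N.IsClosed) :
    ∃ (R : E →L[𝕜] E) (C : E →L[𝕜] F), IsResolventPair N R C := by
  let e := WithLp.prodContinuousLinearEquiv 2 𝕜 E F
  let K : Submodule 𝕜 (WithLp 2 (E × F)) := N.graph.comap e.toLinearMap
  have hK : IsClosed (K : Set (WithLp 2 (E × F))) := hN.preimage e.continuous
  have : CompleteSpace K := hK.completeSpace_coe
  let P : E →L[𝕜] E × F :=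
    e.toContinuousLinearMap ∘L K.starProjection ∘L e.symm.toContinuousLinearMap ∘L .inl 𝕜 E F
  refine ⟨.fst 𝕜 E F ∘L P, .snd 𝕜 E F ∘L P,
    fun v ↦ K.starProjection_apply_mem (e.symm (v, 0)), fun v ↦ ?_⟩
  rw [mem_graph_adjoint_iff hd]
  intro a b hab
  have horth : inner 𝕜 a (v - (P v).1) + inner 𝕜 b (0 - (P v).2) = 0 :=
    K.sub_starProjection_mem_orthogonal (e.symm (v, 0)) (e.symm (a, b)) hab
  rw [zero_sub, inner_neg_right, ← sub_eq_add_neg, sub_eq_zero] at horth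
  exact horth.symm

theorem star_eq (h : IsResolventPair N R C) (hd : Dense (N.domain : Set E)) :
    star R = star R * R + ContinuousLinearMap.adjoint C ∘L C := by
  refine ContinuousLinearMap.ext fun w ↦ ext_inner_left 𝕜 fun v ↦ ?_
  have hinner : inner 𝕜 (C v) (C w) = inner 𝕜 (R v) (w - R w) :=
    (mem_graph_adjoint_iff hd).1 (h.mem_graph_adjoint w) _ _ (h.mem_graph v)
  simp [ContinuousLinearMap.star_eq_adjoint, inner_add_right,
    ContinuousLinearMap.adjoint_inner_right, hinner, inner_sub_right]

theorem isSelfAdjoint (h : IsResolventPair N R C) (hd : Dense (N.domain : Set E)) :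
    IsSelfAdjoint R := by
  rw [← IsSelfAdjoint.star_iff, h.star_eq hd]
  exact (IsSelfAdjoint.star_mul_self R).add C.isPositive_adjoint_comp_self.isSelfAdjoint

theorem adjoint_comp_self (h : IsResolventPair N R C) (hd : Dense (N.domain : Set E)) :
    ContinuousLinearMap.adjoint C ∘L C = R - R * R := by
  rw [eq_sub_iff_add_eq']
  simpa only [(h.isSelfAdjoint hd).star_eq] using (h.star_eq hd).symm

theorem isRegular (h : IsResolventPair N R C) (hd : Dense (N.domain : Set E)) : IsRegular R := by
  have left_regular : IsLeftRegular R := fun S T hST ↦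
    ContinuousLinearMap.ext fun v ↦ h.injective (DFunLike.congr_fun hST v)
  exact ⟨left_regular, by simpa only [(h.isSelfAdjoint hd).star_eq] using left_regular.star⟩

end General

section Normal

variable {N M : H →ₗ.[ℂ] H} {R C S D X : H →L[ℂ] H}

theorem apply_eq_apply_of_mem_graph (h : IsResolventPair N R C) (hN : IsNormalPMap N) {x y : H}
    (hxy : (x, y) ∈ N.graph) : R y = C x := by
  have hswap : (C x, y - C x) ∈ (N.pcomp N.adjoint).graph :=
    mem_graph_pcomp_iff.2
      ⟨x - R x, h.mem_graph_adjoint x, N.graph.sub_mem hxy (h.mem_graph x)⟩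
  rw [hN.2.2] at hswap
  obtain ⟨w, hw, hw'⟩ := mem_graph_pcomp_iff.1 hswap
  simpa only [add_sub_cancel] using h.apply_add hN.1 hw hw'

theorem commute (h : IsResolventPair N R C) (hN : IsNormalPMap N) : Commute R C :=
  ContinuousLinearMap.ext fun v ↦ h.apply_eq_apply_of_mem_graph hN (h.mem_graph v)

theorem star_apply_mem_graph (h : IsResolventPair N R C) (hN : IsNormalPMap N) (v : H) :
    (star C v, v - R v) ∈ N.graph := by
  have hswap : (R v, v - R v) ∈ (N.adjoint.pcomp N).graph :=
    mem_graph_pcomp_iff.2 ⟨C v, h.mem_graph v, h.mem_graph_adjoint v⟩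
  rw [← hN.2.2] at hswap
  obtain ⟨y, hy, hy'⟩ := mem_graph_pcomp_iff.1 hswap
  suffices y = star C v from this ▸ hy'
  refine hN.1.eq_of_inner_right ℂ fun a ha ↦ ?_
  have hNa : (a, N ⟨a, ha⟩) ∈ N.graph := N.mem_graph ⟨a, ha⟩
  have hR : R.IsSymmetric := (h.isSelfAdjoint hN.1).isSymmetric
  calc inner ℂ a y = inner ℂ (N ⟨a, ha⟩) (R v) := ((mem_graph_adjoint_iff hN.1).1 hy _ _ hNa).symm
    _ = inner ℂ (R (N ⟨a, ha⟩)) v := (hR _ _).symm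
    _ = inner ℂ (C a) v := by rw [h.apply_eq_apply_of_mem_graph hN hNa]
    _ = inner ℂ a (star C v) := (ContinuousLinearMap.adjoint_inner_right C a v).symm

theorem mul_star_self (h : IsResolventPair N R C) (hN : IsNormalPMap N) :
    C * star C = R - R * R := by
  ext v
  simpa using (h.apply_eq_apply_of_mem_graph hN (h.star_apply_mem_graph hN v)).symm

theorem isStarNormal (h : IsResolventPair N R C) (hN : IsNormalPMap N) : IsStarNormal C :=
  ⟨(h.adjoint_comp_self hN.1).trans (h.mul_star_self hN).symm⟩

theorem commute_star (h : IsResolventPair N R C) (hN : IsNormalPMap N) : Commute R (star C) :=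
  (h.isStarNormal hN).commute_star_right (h.commute hN)

theorem star_apply_eq_sub (h : IsResolventPair N R C) (hN : IsNormalPMap N) {x y : H}
    (hxy : R y = C x) : star C y = x - R x := by
  apply h.injective
  calc R (star C y) = star C (R y) := DFunLike.congr_fun (h.commute_star hN).eq y
    _ = star C (C x) := by rw [hxy]
    _ = R x - R (R x) := DFunLike.congr_fun (h.adjoint_comp_self hN.1) x
    _ = R (x - R x) := (_root_.map_sub R x (R x)).symm

theorem mem_graph_iff (h : IsResolventPair N R C) (hN : IsNormalPMap N) {x y : H} :
    (x, y) ∈ N.graph ↔ R y = C x := by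
  refine ⟨h.apply_eq_apply_of_mem_graph hN, fun hxy ↦ ?_⟩
  simpa [h.star_apply_eq_sub hN hxy, hxy] using
    N.graph.add_mem (h.mem_graph x) (h.star_apply_mem_graph hN y)

theorem intertwines_iff (hR : IsResolventPair N R C) (hN : IsNormalPMap N)
    (hS : IsResolventPair M S D) (hM : IsNormalPMap M) :
    (ofCLM X).pcomp N ≤ M.pcomp (ofCLM X) ↔ S * X * C = D * X * R := by
  rw [ofCLM_pcomp_le_pcomp_ofCLM_iff]
  constructor
  · intro h
    ext v
    exact (hS.mem_graph_iff hM).1 (h _ _ (hR.mem_graph v))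
  · intro h x y hxy
    have mul_one_sub_eq : S * X * (1 - R) = D * X * star C := by
      apply (hR.isRegular hN.1).right
      calc S * X * (1 - R) * R = S * X * (R - R * R) := by noncomm_ring
        _ = S * X * C * star C := by rw [← hR.mul_star_self hN, ← mul_assoc]
        _ = D * X * star C * R := by
          rw [h, mul_assoc, (hR.commute_star hN).eq, ← mul_assoc]
    have hxy' : R y = C x := (hR.mem_graph_iff hN).1 hxy
    rw [hS.mem_graph_iff hM]
    calc S (X y) = (S * X * (1 - R)) y + (S * X) (R y) := by simp
      _ = (D * X * star C) y + (S * X * C) x := by rw [mul_one_sub_eq, hxy']; rfl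
      _ = (D * X) (x - R x) + (D * X * R) x := by rw [h, ← hR.star_apply_eq_sub hN hxy']; rfl
      _ = D (X x) := by simp

end Normal

end IsResolventPair

theorem fuglede_putnam_adjoint {N M : H →ₗ.[ℂ] H} (hN : IsNormalPMap N) (hM : IsNormalPMap M)
    {X : H →L[ℂ] H} (hX : (ofCLM X).pcomp N ≤ M.pcomp (ofCLM X)) :
    (ofCLM (star X)).pcomp M ≤ N.pcomp (ofCLM (star X)) := by
  obtain ⟨R, C, hR⟩ := IsResolventPair.exists_of_isClosed hN.1 hN.2.1
  obtain ⟨S, D, hS⟩ := IsResolventPair.exists_of_isClosed hM.1 hM.2.1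
  have hR_sa := hR.isSelfAdjoint hN.1
  have hS_sa := hS.isSelfAdjoint hM.1
  have fuglede : S * X * star C = star D * X * R :=
    mul_mul_star_eq_star_mul_mul hR_sa hS_sa (hR.isRegular hN.1).right (hS.isRegular hM.1).left
      (hR.isStarNormal hN) (hS.isStarNormal hM) (hR.commute hN) (hS.commute hM)
      ((hR.intertwines_iff hN hS hM).1 hX)
  rw [hS.intertwines_iff hM hR hN]
  simpa [hR_sa.star_eq, hS_sa.star_eq, mul_assoc] using congrArg star fuglede.symm

theorem kaplansky_unbounded_forward_general (B : H →ₗ.[ℂ] H) (A : H →L[ℂ] H)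
    (hAB : IsNormalPMap ((ofCLM A).pcomp B)) (hBA : IsNormalPMap (B.pcomp (ofCLM A))) :
    (ofCLM (ContinuousLinearMap.adjoint A * A)).pcomp B ≤
      B.pcomp (ofCLM (A * ContinuousLinearMap.adjoint A)) := by
  rw [ofCLM_mul, ofCLM_mul, pcomp_assoc, ← pcomp_assoc B]
  exact fuglede_putnam_adjoint hBA hAB (pcomp_assoc _ _ _).ge

/-- If `B` is densely defined and closed, `A` is bounded, and both `A` and `AB`
are normal, then normality of `BA` implies `A* A B ⊂ B A* A`. -/
theorem kaplansky_unbounded_forward [TopologicalSpace.SeparableSpace H] (B : H →ₗ.[ℂ] H) (A : H →L[ℂ] H)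
    (hBdense : Dense (B.domain : Set H)) (hBclosed : B.IsClosed)
    (hA : IsNormalOp A) (hAB : IsNormalPMap ((ofCLM A).pcomp B))
    (hBA : IsNormalPMap (B.pcomp (ofCLM A))) :
    (ofCLM (ContinuousLinearMap.adjoint A * A)).pcomp B ≤
      B.pcomp (ofCLM (ContinuousLinearMap.adjoint A * A)) := by
  simpa only [show A * ContinuousLinearMap.adjoint A = _ from hA] using
    kaplansky_unbounded_forward_general B A hAB hBA
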